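/- Let F : ℂ → ℂ be entire with F ≢ 0, and let γ : ℝ → ℂ be a solution of ẋ = F(x) whose image is bounded and which is not periodic (there is no T > 0 with γ(t + T) = γ(t) for all t ∈ ℝ). Then γ is homoclinic or heteroclinic: there exist a, b ∈ ℂ with F(a) = 0 and F(b) = 0 such that γ(t) → a as t → ∞ and γ(t) → b as t → −∞. -/

import Mathlib

open Set Filter Topology

lemma lip (F : ℂ → ℂ) (hF : Differentiable ℂ F) (R : ℝ) :
    ∃ M : ℝ, 0 < M ∧ ∃ K : NNReal, 0 < K ∧ (∀ z, ‖z‖ ≤ R → ‖F z‖ ≤ M) ∧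
      LipschitzOnWith K F (Metric.closedBall 0 R) := by
  obtain ⟨M, hM⟩ := (isCompact_closedBall (0:ℂ) R).exists_bound_of_continuousOn
    hF.continuous.continuousOn
  have hd : Continuous (deriv F) := (hF.contDiff (n := 1)).continuous_deriv le_rfl
  obtain ⟨K, hK⟩ := (isCompact_closedBall (0:ℂ) R).exists_bound_of_continuousOn hd.continuousOn
  refine ⟨max M 1, by positivity, ⟨max K 1, by positivity⟩, ?_, ?_, ?_⟩
  · show (0:ℝ) < max K 1
    positivity
  · intro z hz
    exact (hM z (by simpa using hz)).trans (le_max_left _ _)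
  · refine (convex_closedBall (0:ℂ) R).lipschitzOnWith_of_nnnorm_deriv_le
      (fun x _ => hF x) fun x hx => ?_
    exact (hK x hx).trans (le_max_left _ _)

lemma picard (F : ℂ → ℂ) (hF : Differentiable ℂ F) (R : ℝ) (hR : 0 ≤ R) :
    ∃ δ > 0, ∀ p : ℂ, ‖p‖ ≤ R → ∃ φ : ℂ → ℂ, φ 0 = p ∧
      ∀ z ∈ Metric.ball (0:ℂ) δ, HasDerivAt φ (F (φ z)) z ∧ ‖φ z‖ ≤ R + 1 := by
  obtain ⟨M, hM, K, hK, hFM, hL⟩ := lip F hF (R + 1)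
  have hK' : (0:ℝ) < K := hK
  obtain ⟨δ, hδ, hδM, hδK⟩ : ∃ δ > 0, M * δ ≤ 1 ∧ K * δ ≤ 1 / 2 := by
    refine ⟨min (1 / M) (1 / (2 * K)), by positivity, ?_, ?_⟩
    · calc M * _ ≤ M * (1 / M) := by gcongr; exact min_le_left _ _
        _ = 1 := by field_simp
    · calc (K:ℝ) * _ ≤ K * (1 / (2 * K)) := by gcongr; exact min_le_right _ _
        _ = 1 / 2 := by field_simp
  refine ⟨δ, hδ, fun p hp => ?_⟩
  set B := Metric.ball (0:ℂ) δ with hB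
  have h0B : (0:ℂ) ∈ B := Metric.mem_ball_self hδ
  let P : (ℂ → ℂ) → Prop := fun f => f 0 = p ∧ DifferentiableOn ℂ f B ∧ ∀ z ∈ B, ‖f z‖ ≤ R + 1
  have mv : ∀ (g g' : ℂ → ℂ) (C : ℝ), 0 ≤ C → (∀ z ∈ B, HasDerivAt g (g' z) z) →
      (∀ z ∈ B, ‖g' z‖ ≤ C) → ∀ z ∈ B, ‖g z - g 0‖ ≤ C * δ := by
    intro g g' C hC hg hb z hz
    have := (convex_ball (0:ℂ) δ).norm_image_sub_le_of_norm_hasDerivWithin_le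
      (fun x hx => (hg x hx).hasDerivWithinAt) hb h0B hz
    refine this.trans ?_
    have hz' : ‖z‖ < δ := by simpa [hB] using hz
    rw [sub_zero]
    gcongr
  have step : ∀ f : {f // P f}, ∃ g : {g // P g}, ∀ z ∈ B, HasDerivAt g.1 (F (f.1 z)) z := by
    rintro ⟨f, hf0, hfd, hfb⟩
    obtain ⟨g, hg0, hg⟩ := (DifferentiableOn.isExactOn_ball
      (hF.comp_differentiableOn hfd)).with_val_at 0 p
    refine ⟨⟨g, hg0, fun z hz => (hg z hz).differentiableAt.differentiableWithinAt, ?_⟩, hg⟩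
    intro z hz
    have := mv g _ M hM.le hg (fun z hz => hFM _ (hfb z hz)) z hz
    rw [hg0] at this
    calc ‖g z‖ = ‖p + (g z - p)‖ := by ring_nf
      _ ≤ ‖p‖ + ‖g z - p‖ := norm_add_le _ _
      _ ≤ R + 1 := by linarith
  choose S hS using step
  let u : ℕ → {f // P f} := fun n => S^[n] ⟨fun _ => p, rfl, differentiableOn_const _,
    fun z _ => by linarith⟩
  have hu : ∀ n, u (n+1) = S (u n) := fun n => Function.iterate_succ_apply' _ _ _
  have hud : ∀ n, ∀ z ∈ B, HasDerivAt (u (n+1)).1 (F ((u n).1 z)) z := by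
    intro n; rw [hu]; exact hS _
  have hmem : ∀ n, ∀ z ∈ B, (u n).1 z ∈ Metric.closedBall (0:ℂ) (R+1) := by
    intro n z hz; simpa using (u n).2.2.2 z hz
  have hdist : ∀ n, ∀ z ∈ B, dist ((u n).1 z) ((u (n+1)).1 z) ≤ (2 * (R+1)) * (1/2)^n := by
    intro n
    induction n with
    | zero =>
      intro z hz
      rw [dist_eq_norm]
      have h1 := (u 0).2.2.2 z hz
      have h2 := (u 1).2.2.2 z hz
      have := norm_sub_le ((u 0).1 z) ((u 1).1 z)
      simp only [zero_add, pow_zero, mul_one]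
      linarith
    | succ n ih =>
      intro z hz
      have := mv (fun z => (u (n+1)).1 z - (u (n+2)).1 z) (fun z => F ((u n).1 z) - F ((u (n+1)).1 z))
        (K * ((2 * (R+1)) * (1/2)^n)) (by positivity)
        (fun z hz => (hud n z hz).sub (hud (n+1) z hz))
        (fun z hz => by
          rw [← dist_eq_norm]
          exact (hL.dist_le_mul _ (hmem n z hz) _ (hmem (n+1) z hz)).trans
            (by gcongr; exact ih z hz)) z hz
      simp only [(u (n+1)).2.1, (u (n+2)).2.1, sub_self, sub_zero] at this
      rw [dist_eq_norm]
      refine this.trans ?_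
      calc K * ((2 * (R+1)) * (1/2)^n) * δ = (K * δ) * ((2 * (R+1)) * (1/2)^n) := by ring
        _ ≤ (1/2) * ((2 * (R+1)) * (1/2)^n) := by gcongr
        _ = _ := by ring
  have hlim : ∀ z, ∃ w, z ∈ B → Tendsto (fun n => (u n).1 z) atTop (𝓝 w) := by
    intro z
    by_cases hz : z ∈ B
    · obtain ⟨w, hw⟩ := cauchySeq_tendsto_of_complete
        (cauchySeq_of_le_geometric (1/2) _ (by norm_num) (fun n => hdist n z hz))
      exact ⟨w, fun _ => hw⟩
    · exact ⟨0, fun h => absurd h hz⟩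
  choose φ hφ using hlim
  have hφm : ∀ z ∈ B, φ z ∈ Metric.closedBall (0:ℂ) (R+1) := fun z hz =>
    Metric.isClosed_closedBall.mem_of_tendsto (hφ z hz) (Eventually.of_forall fun n => hmem n z hz)
  have hunif : TendstoUniformlyOn (fun n z => F ((u n).1 z)) (fun z => F (φ z)) atTop B := by
    rw [Metric.tendstoUniformlyOn_iff]
    intro ε hε
    have ht : Tendsto (fun n : ℕ => (K:ℝ) * ((2 * (R+1)) * (1/2)^n / (1 - 1/2))) atTop (𝓝 0) := by
      have := tendsto_pow_atTop_nhds_zero_of_lt_one (r := (1/2:ℝ)) (by norm_num) (by norm_num)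
      simpa using (((this.const_mul (2 * (R+1))).div_const (1 - 1/2)).const_mul (K:ℝ))
    filter_upwards [ht.eventually_lt_const hε] with n hn z hz
    refine lt_of_le_of_lt ?_ hn
    rw [dist_comm]
    refine (hL.dist_le_mul _ (hmem n z hz) _ (hφm z hz)).trans ?_
    gcongr
    exact dist_le_of_le_geometric_of_tendsto (1/2) _ (by norm_num) (fun n => hdist n z hz)
      (hφ z hz) n
  refine ⟨φ, ?_, fun z hz => ⟨?_, by simpa using hφm z hz⟩⟩
  · refine tendsto_nhds_unique (hφ 0 h0B) ?_
    simp only [(u _).2.1]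
    exact tendsto_const_nhds
  · exact hasDerivAt_of_tendstoUniformlyOn (f := fun n => (u (n+1)).1) Metric.isOpen_ball hunif
      (Eventually.of_forall fun n => hud n)
      (fun z hz => (tendsto_add_atTop_iff_nat 1).2 (hφ z hz)) hz

lemma uniq (F : ℂ → ℂ) (hF : Differentiable ℂ F) (R : ℝ) (D : Set ℂ) (hD : Convex ℝ D)
    (u v : ℂ → ℂ) (hu : ∀ z ∈ D, HasDerivAt u (F (u z)) z ∧ ‖u z‖ ≤ R)
    (hv : ∀ z ∈ D, HasDerivAt v (F (v z)) z ∧ ‖v z‖ ≤ R)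
    (z₀ : ℂ) (h₀ : z₀ ∈ D) (h : u z₀ = v z₀) (z₁ : ℂ) (h₁ : z₁ ∈ D) : u z₁ = v z₁ := by
  obtain ⟨M, hM, K, hK, hFM, hL⟩ := lip F hF R
  have hl : ∀ t ∈ Icc (0:ℝ) 1, z₀ + (t:ℂ) * (z₁ - z₀) ∈ D := by
    intro t ht
    have := hD.add_smul_sub_mem h₀ h₁ ht
    simpa using this
  have hld : ∀ t : ℝ, HasDerivAt (fun t : ℝ => z₀ + (t:ℂ) * (z₁ - z₀)) (z₁ - z₀) t := by
    intro t
    have := ((Complex.ofRealCLM.hasDerivAt (x := t)).mul_const (z₁ - z₀)).const_add z₀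
    simpa using this
  have key : ∀ w : ℂ → ℂ, (∀ z ∈ D, HasDerivAt w (F (w z)) z ∧ ‖w z‖ ≤ R) →
      ∀ t ∈ Icc (0:ℝ) 1, HasDerivAt (fun t : ℝ => w (z₀ + (t:ℂ) * (z₁ - z₀)))
        ((z₁ - z₀) * F (w (z₀ + (t:ℂ) * (z₁ - z₀)))) t := by
    intro w hw t ht
    have := HasDerivAt.scomp t (hw _ (hl t ht)).1 (hld t)
    rw [smul_eq_mul] at this
    exact this
  have hlip : LipschitzOnWith (‖z₁ - z₀‖₊ * K) (fun x => (z₁ - z₀) * F x)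
      (Metric.closedBall 0 R) := by
    refine LipschitzOnWith.of_dist_le_mul fun x hx y hy => ?_
    rw [dist_eq_norm, ← mul_sub, norm_mul]
    have := hL.dist_le_mul x hx y hy
    rw [dist_eq_norm] at this
    push_cast
    rw [mul_assoc]
    gcongr
  have := ODE_solution_unique_of_mem_Icc_right (a := 0) (b := 1)
    (f := fun t : ℝ => u (z₀ + (t:ℂ) * (z₁ - z₀))) (g := fun t : ℝ => v (z₀ + (t:ℂ) * (z₁ - z₀)))
    (v := fun _ x => (z₁ - z₀) * F x) (s := fun _ => Metric.closedBall 0 R)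
    (K := ‖z₁ - z₀‖₊ * K)
    (fun _ _ => hlip)
    (fun t ht => (key u hu t ht).continuousAt.continuousWithinAt)
    (fun t ht => (key u hu t (Ico_subset_Icc_self ht)).hasDerivWithinAt)
    (fun t ht => by simpa using (hu _ (hl t (Ico_subset_Icc_self ht))).2)
    (fun t ht => (key v hv t ht).continuousAt.continuousWithinAt)
    (fun t ht => (key v hv t (Ico_subset_Icc_self ht)).hasDerivWithinAt)
    (fun t ht => by simpa using (hv _ (hl t (Ico_subset_Icc_self ht))).2)
    (by simpa using h) (right_mem_Icc.2 zero_le_one)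
  simpa using this

lemma strip (F : ℂ → ℂ) (hF : Differentiable ℂ F)
    (γ : ℝ → ℂ) (hγ : ∀ t : ℝ, HasDerivAt γ (F (γ t)) t) (R : ℝ) (hR : 0 ≤ R)
    (hb : ∀ t, ‖γ t‖ ≤ R) :
    ∃ δ > 0, (∀ p : ℂ, ‖p‖ ≤ R → ∃ φ : ℂ → ℂ, φ 0 = p ∧
      ∀ z ∈ Metric.ball (0:ℂ) δ, HasDerivAt φ (F (φ z)) z ∧ ‖φ z‖ ≤ R + 1) ∧
      ∃ Γ : ℂ → ℂ, (∀ t : ℝ, Γ t = γ t) ∧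
        ∀ z : ℂ, |z.im| < δ → HasDerivAt Γ (F (Γ z)) z ∧ ‖Γ z‖ ≤ R + 1 := by
  obtain ⟨δ, hδ, hφ⟩ := picard F hF R hR
  refine ⟨δ, hδ, hφ, ?_⟩
  have hφ' : ∀ t : ℝ, ∃ φ : ℂ → ℂ, φ 0 = γ t ∧
      ∀ z ∈ Metric.ball (0:ℂ) δ, HasDerivAt φ (F (φ z)) z ∧ ‖φ z‖ ≤ R + 1 :=
    fun t => hφ _ (hb t)
  choose φ h0 hd using hφ'
  obtain ⟨M, hM, K, hK, hFM, hL⟩ := lip F hF (R + 1)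
  have hreal : ∀ t₀ t : ℝ, |t - t₀| < δ → φ t₀ ((t:ℂ) - t₀) = γ t := by
    intro t₀ t ht
    have hin : ∀ s ∈ Ioo (t₀ - δ) (t₀ + δ), ((s:ℂ) - t₀) ∈ Metric.ball (0:ℂ) δ := by
      intro s hs
      rw [mem_ball_zero_iff, ← Complex.ofReal_sub, Complex.norm_real, Real.norm_eq_abs, abs_lt]
      constructor <;> linarith [hs.1, hs.2]
    rw [abs_lt] at ht
    refine ODE_solution_unique_of_mem_Ioo (a := t₀ - δ) (b := t₀ + δ) (t₀ := t₀)
      (f := fun s : ℝ => φ t₀ ((s:ℂ) - t₀)) (g := γ) (v := fun _ x => F x)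
      (s := fun _ => Metric.closedBall 0 (R+1)) (K := K) (fun _ _ => hL)
      ⟨by linarith, by linarith⟩ (fun s hs => ⟨?_, ?_⟩) (fun s hs => ⟨hγ s, ?_⟩) ?_
      ⟨by linarith, by linarith⟩
    · have h1 : HasDerivAt (fun s : ℝ => (s:ℂ) - t₀) 1 s := by
        simpa using (Complex.ofRealCLM.hasDerivAt (x := s)).sub_const (t₀:ℂ)
      have h2 := HasDerivAt.scomp s (hd t₀ _ (hin s hs)).1 h1
      rw [one_smul] at h2
      exact h2
    · simpa using (hd t₀ _ (hin s hs)).2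
    · simpa using (hb s).trans (by linarith)
    · simp [h0]
  have hloc : ∀ (t₀ : ℝ) (z : ℂ), ‖z - t₀‖ < δ →
      φ z.re (z.im * Complex.I) = φ t₀ (z - t₀) := by
    intro t₀ z hz
    have hre : |z.re - t₀| < δ := lt_of_le_of_lt (by simpa using Complex.abs_re_le_norm (z - t₀)) hz
    have him : |z.im| < δ := lt_of_le_of_lt (by simpa using Complex.abs_im_le_norm (z - t₀)) hz
    have hsplit : (z.im * Complex.I) + ((z.re:ℂ) - t₀) = z - t₀ := by
      conv_rhs => rw [← Complex.re_add_im z]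
      ring
    have := uniq F hF (R+1) (Metric.ball 0 δ ∩ Metric.ball (-((z.re:ℂ) - t₀)) δ)
      ((convex_ball _ _).inter (convex_ball _ _)) (φ z.re) (fun w => φ t₀ (w + ((z.re:ℂ) - t₀)))
      (fun w hw => hd _ _ hw.1) (fun w hw => ?_) 0 ⟨by simpa using hδ, ?_⟩ ?_
      (z.im * Complex.I) ⟨by simpa using him, ?_⟩
    · rw [this, hsplit]
    · have hw2 : w + ((z.re:ℂ) - t₀) ∈ Metric.ball (0:ℂ) δ := by
        have := hw.2
        rw [Metric.mem_ball, dist_eq_norm, sub_neg_eq_add] at this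
        simpa using this
      exact ⟨(hd t₀ _ hw2).1.comp_add_const _ _, (hd t₀ _ hw2).2⟩
    · rw [Metric.mem_ball, dist_eq_norm, sub_neg_eq_add, zero_add, ← Complex.ofReal_sub,
        Complex.norm_real]
      exact hre
    · simp only [zero_add]
      rw [h0, hreal t₀ z.re hre]
    · rw [Metric.mem_ball, dist_eq_norm, sub_neg_eq_add, hsplit]
      exact hz
  refine ⟨fun z => φ z.re (z.im * Complex.I), fun t => by simp [h0], fun z hz => ?_⟩
  have hz' : ‖z - z.re‖ < δ := by
    have : z - z.re = z.im * Complex.I := by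
      apply Complex.ext <;> simp
    rw [this]; simpa using hz
  have hmem : z - z.re ∈ Metric.ball (0:ℂ) δ := by simpa using hz'
  refine ⟨?_, ?_⟩
  · have h1 : HasDerivAt (fun w => φ z.re (w - z.re)) (F (φ z.re (z - z.re))) z :=
      (hd z.re _ hmem).1.comp_sub_const _ _
    have h2 : (fun w : ℂ => φ w.re (w.im * Complex.I)) =ᶠ[𝓝 z] fun w => φ z.re (w - z.re) := by
      have : ∀ᶠ w : ℂ in 𝓝 z, ‖w - z.re‖ < δ :=
        (by fun_prop : Continuous fun w : ℂ => ‖w - z.re‖).continuousAt.eventually_lt_const hz'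
      filter_upwards [this] with w hw using hloc _ w hw
    have := h1.congr_of_eventuallyEq h2
    simp only [hloc _ z hz']
    exact this
  · simp only [hloc _ z hz']
    exact (hd z.re _ hmem).2

lemma omega_zero (F : ℂ → ℂ) (hF : Differentiable ℂ F)
    (γ : ℝ → ℂ) (hγ : ∀ t : ℝ, HasDerivAt γ (F (γ t)) t) (R : ℝ) (hR : 0 ≤ R)
    (hb : ∀ t, ‖γ t‖ ≤ R)
    (hnp : ¬ ∃ T > 0, ∀ t : ℝ, γ (t + T) = γ t) (p : ℂ) (hp : MapClusterPt p atTop γ) :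
    F p = 0 := by
  by_contra hFp
  obtain ⟨δ, hδ, hφ, Γ, hΓγ, hΓ⟩ := strip F hF γ hγ R hR hb
  have hpR : ‖p‖ ≤ R := by
    have : p ∈ Metric.closedBall (0:ℂ) R := by
      have hc : IsClosed (Metric.closedBall (0:ℂ) R) := Metric.isClosed_closedBall
      by_contra hp'
      have := mapClusterPt_iff_frequently.1 hp _ (hc.isOpen_compl.mem_nhds hp')
      obtain ⟨t, ht⟩ := this.exists
      exact ht (by simpa using hb t)
    simpa using this
  obtain ⟨φ, h0, hd⟩ := hφ p hpR
  have hop : φ '' Metric.ball 0 (δ/4) ∈ 𝓝 p := by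
    have han : AnalyticAt ℂ φ 0 :=
      DifferentiableOn.analyticAt (s := Metric.ball 0 δ)
        (fun z hz => (hd z hz).1.differentiableAt.differentiableWithinAt)
        (Metric.ball_mem_nhds _ hδ)
    have hs := han.hasStrictDerivAt
    have hm := hs.map_nhds_eq (by
      rw [(hd 0 (Metric.mem_ball_self hδ)).1.deriv, h0]; exact hFp)
    rw [← h0, ← hm]
    exact image_mem_map (Metric.ball_mem_nhds _ (by positivity))
  have hfr := mapClusterPt_iff_frequently.1 hp _ hop
  obtain ⟨t₁, b, hbm, hb1⟩ := hfr.exists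
  obtain ⟨t₂, ⟨a, ham, ha1⟩, ht⟩ := (hfr.and_eventually (eventually_ge_atTop (t₁ + δ))).exists
  rw [mem_ball_zero_iff] at hbm ham
  have ham1 := (abs_lt.1 ((Complex.abs_re_le_norm a).trans_lt ham))
  have ham2 := (abs_lt.1 ((Complex.abs_im_le_norm a).trans_lt ham))
  have hbm1 := (abs_lt.1 ((Complex.abs_re_le_norm b).trans_lt hbm))
  have hbm2 := (abs_lt.1 ((Complex.abs_im_le_norm b).trans_lt hbm))
  set τ : ℂ := (t₂ - a) - (t₁ - b) with hτ
  have hτre : 0 < τ.re := by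
    simp [hτ]; linarith
  have hτim : |τ.im| < δ / 2 := by
    rw [abs_lt]; simp [hτ]; constructor <;> linarith
  have e1 : Γ (b + (t₂ - a)) = φ b := by
    refine uniq F hF (R+1) (Metric.ball 0 (δ/4)) (convex_ball _ _) (fun w => Γ (w + (t₂ - a))) φ
      (fun w hw => ?_) (fun w hw => hd w ?_) a (by simpa using ham) ?_ b (by simpa using hbm)
    · rw [mem_ball_zero_iff] at hw
      have hw2 := (abs_lt.1 ((Complex.abs_im_le_norm w).trans_lt hw))
      have : |(w + (t₂ - a)).im| < δ := by
        rw [abs_lt]; simp; constructor <;> linarith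
      exact ⟨(hΓ _ this).1.comp_add_const _ _, (hΓ _ this).2⟩
    · exact Metric.ball_subset_ball (by linarith) hw
    · simp only [add_sub_cancel]
      rw [hΓγ, ha1]
  have hper : ∀ z : ℂ, |z.im| < δ → |z.im + τ.im| < δ → Γ (z + τ) = Γ z := by
    intro z hz1 hz2
    refine uniq F hF (R+1) (Complex.imLm ⁻¹' (Ioo (-δ) δ ∩ Ioo (-δ - τ.im) (δ - τ.im)))
      (((convex_Ioo _ _).inter (convex_Ioo _ _)).linear_preimage Complex.imLm)
      (fun w => Γ (w + τ)) Γ (fun w hw => ?_) (fun w hw => hΓ w (abs_lt.2 hw.1)) t₁ ?_ ?_ z ?_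
    · have : |(w + τ).im| < δ := by
        have := hw.2
        simp only [Complex.imLm_coe, mem_Ioo] at this
        rw [abs_lt]; simp; constructor <;> linarith
      exact ⟨(hΓ _ this).1.comp_add_const _ _, (hΓ _ this).2⟩
    · have := abs_lt.1 hτim
      simp only [mem_preimage, Complex.imLm_coe, Complex.ofReal_im, mem_inter_iff, mem_Ioo]
      refine ⟨⟨?_, ?_⟩, ?_, ?_⟩ <;> linarith
    · have : (t₁:ℂ) + τ = b + (t₂ - a) := by rw [hτ]; ring
      simp only [this]
      rw [e1, hΓγ, hb1]
    · have h1 := abs_lt.1 hz1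
      have h2 := abs_lt.1 hz2
      simp only [mem_preimage, Complex.imLm_coe, mem_inter_iff, mem_Ioo]
      refine ⟨⟨?_, ?_⟩, ?_, ?_⟩ <;> linarith
  by_cases hη : τ.im = 0
  · refine hnp ⟨τ.re, hτre, fun t => ?_⟩
    have := hper t (by simpa using hδ) (by simpa [hη] using hδ)
    have hτ' : τ = (τ.re : ℂ) := by
      apply Complex.ext <;> simp [hη]
    rw [hτ', ← Complex.ofReal_add, hΓγ, hΓγ] at this
    exact this
  set η := τ.im with hηdef
  have hη' : 0 < |η| := abs_pos.2 hη
  let k : ℂ → ℤ := fun z => round (z.im / η)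
  let G : ℂ → ℂ := fun z => Γ (z - k z * τ)
  have him : ∀ (z : ℂ) (n : ℤ), (z - n * τ).im = z.im - n * η := by
    intro z n; simp [hηdef]
  have hk : ∀ z : ℂ, |z.im - k z * η| ≤ |η| / 2 := by
    intro z
    have h1 := abs_sub_round (z.im / η)
    have h2 : z.im - k z * η = (z.im / η - round (z.im / η)) * η := by
      rw [sub_mul, div_mul_cancel₀ _ hη]
    rw [h2, abs_mul]
    nlinarith
  have hGb : ∀ z, ‖G z‖ ≤ R + 1 := by
    intro z
    refine (hΓ _ ?_).2
    rw [him]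
    linarith [hk z]
  have hGloc : ∀ (z : ℂ) (n : ℤ), |z.im - n * η| < |η| → G z = Γ (z - n * τ) := by
    intro z n hn
    have hk1 := hk z
    have hlt : |((k z - n : ℤ) : ℝ)| < 2 := by
      have h1 : |((k z - n : ℤ) : ℝ)| * |η| < 2 * |η| := by
        rw [← abs_mul]
        have : ((k z - n : ℤ) : ℝ) * η = (z.im - n * η) - (z.im - k z * η) := by
          push_cast; ring
        rw [this]
        exact (abs_sub _ _).trans_lt (by linarith)
      exact lt_of_mul_lt_mul_right h1 hη'.le
    have hlt' : |k z - n| < 2 := by exact_mod_cast hlt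
    rw [abs_lt] at hlt'
    have hcases : k z = n ∨ k z = n + 1 ∨ n = k z + 1 := by omega
    have A1 : |(z - n * τ).im| < δ := by rw [him]; linarith
    have A2 : |(z - k z * τ).im| < δ := by rw [him]; linarith
    rcases hcases with h | h | h
    · simp only [G, h]
    · have e : (z - k z * τ) + τ = z - n * τ := by rw [h]; push_cast; ring
      have := hper (z - k z * τ) A2 (by rw [← Complex.add_im, e]; exact A1)
      rw [e] at this
      exact this.symm
    · have e : (z - n * τ) + τ = z - k z * τ := by rw [h]; push_cast; ring
      have := hper (z - n * τ) A1 (by rw [← Complex.add_im, e]; exact A2)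
      rw [e] at this
      exact this
  have hGd : Differentiable ℂ G := by
    intro z
    have hnear : ∀ᶠ w : ℂ in 𝓝 z, |w.im - k z * η| < |η| := by
      refine (by fun_prop : Continuous fun w : ℂ => |w.im - k z * η|).continuousAt.eventually_lt_const ?_
      linarith [hk z]
    have h2 : G =ᶠ[𝓝 z] fun w => Γ (w - k z * τ) := by
      filter_upwards [hnear] with w hw using hGloc w _ hw
    have h1 := (hΓ (z - k z * τ) (by rw [him]; linarith [hk z])).1.comp_sub_const z (k z * τ)
    exact (h1.congr_of_eventuallyEq h2).differentiableAt
  have hconst := hGd.apply_eq_apply_of_bounded (by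
    rw [isBounded_iff_forall_norm_le]
    exact ⟨R + 1, by rintro _ ⟨z, rfl⟩; exact hGb z⟩)
  have hGγ : ∀ t : ℝ, G t = γ t := by
    intro t
    rw [hGloc t 0 (by simpa using hη'), ← hΓγ]
    simp
  exact hnp ⟨1, one_pos, fun t => by rw [← hGγ, ← hGγ]; exact hconst _ _⟩

lemma forward (F : ℂ → ℂ) (hF : Differentiable ℂ F) (hF0 : ∃ z : ℂ, F z ≠ 0)
    (γ : ℝ → ℂ) (hγ : ∀ t : ℝ, HasDerivAt γ (F (γ t)) t)
    (hbd : Bornology.IsBounded (Set.range γ))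
    (hnp : ¬ ∃ T > 0, ∀ t : ℝ, γ (t + T) = γ t) :
    ∃ a : ℂ, F a = 0 ∧ Tendsto γ atTop (nhds a) := by
  obtain ⟨R, hR⟩ := isBounded_iff_forall_norm_le.1 hbd
  have hb : ∀ t, ‖γ t‖ ≤ R := fun t => hR _ ⟨t, rfl⟩
  have hR0 : 0 ≤ R := (norm_nonneg _).trans (hb 0)
  have hz := omega_zero F hF γ hγ R hR0 hb hnp
  have hcont : Continuous γ := continuous_iff_continuousAt.2 fun t => (hγ t).continuousAt
  obtain ⟨a, -, ha⟩ := (isCompact_closedBall (0:ℂ) R).exists_mapClusterPt_of_frequently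
    (l := atTop) (f := γ) (Eventually.frequently (Eventually.of_forall fun t => by simpa using hb t))
  refine ⟨a, hz a ha, ?_⟩
  have hiso : ∀ᶠ z in 𝓝[≠] a, F z ≠ 0 := by
    have han : AnalyticOnNhd ℂ F univ := fun z _ => hF.analyticAt z
    rcases (han a trivial).eventually_eq_zero_or_eventually_ne_zero with h | h
    · exfalso
      obtain ⟨z, hz⟩ := hF0
      exact hz (han.eqOn_zero_of_preconnected_of_eventuallyEq_zero isPreconnected_univ
        (mem_univ a) h (mem_univ z))
    · exact h
  rw [eventually_nhdsWithin_iff, Metric.eventually_nhds_iff] at hiso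
  obtain ⟨ε, hε, hiso⟩ := hiso
  rw [Metric.tendsto_nhds]
  intro ε₁ hε₁
  by_contra hcon
  rw [not_eventually] at hcon
  set r := min ε₁ (ε/2) with hr
  have hr0 : 0 < r := by positivity
  have hr1 : r ≤ ε₁ := min_le_left _ _
  have hr2 : r < ε := (min_le_right _ _).trans_lt (by linarith)
  have hnear := mapClusterPt_iff_frequently.1 ha _ (Metric.ball_mem_nhds a hr0)
  have hsph : ∃ᶠ t in atTop, γ t ∈ Metric.sphere a r := by
    rw [frequently_atTop] at hnear hcon ⊢
    intro T
    obtain ⟨t₁, ht₁, h1⟩ := hnear T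
    obtain ⟨t₂, ht₂, h2⟩ := hcon T
    have hc : Continuous fun t => dist (γ t) a := by fun_prop
    obtain ⟨t, ht, hte⟩ := intermediate_value_uIcc (a := t₁) (b := t₂) hc.continuousOn
      (mem_uIcc.2 (Or.inl ⟨(Metric.mem_ball.1 h1).le, hr1.trans (not_lt.1 h2)⟩))
    refine ⟨t, ?_, hte⟩
    exact (le_min ht₁ ht₂).trans ht.1
  obtain ⟨q, hq, hqc⟩ := (isCompact_sphere a r).exists_mapClusterPt_of_frequently hsph
  have hq' : dist q a = r := hq
  refine hiso (by rw [hq']; exact hr2) ?_ (hz q hqc)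
  rintro rfl
  simp at hq'
  linarith

theorem stmt_16 (F : ℂ → ℂ) (hF : Differentiable ℂ F) (hF0 : ∃ z : ℂ, F z ≠ 0)
    (γ : ℝ → ℂ) (hγ : ∀ t : ℝ, HasDerivAt γ (F (γ t)) t)
    (hbd : Bornology.IsBounded (Set.range γ))
    (hnp : ¬ ∃ T > 0, ∀ t : ℝ, γ (t + T) = γ t) :
    ∃ a b : ℂ, F a = 0 ∧ F b = 0 ∧
      Tendsto γ atTop (nhds a) ∧ Tendsto γ atBot (nhds b) := by
  obtain ⟨a, ha, hat⟩ := forward F hF hF0 γ hγ hbd hnp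
  obtain ⟨b, hb, hbt⟩ := forward (fun z => -F z) hF.neg (by simpa using hF0) (fun t => γ (-t))
    (fun t => by
      have h := HasDerivAt.scomp t (hγ (-t)) (hasDerivAt_neg t)
      rw [neg_one_smul] at h
      exact h)
    (hbd.subset (by rintro _ ⟨t, rfl⟩; exact ⟨-t, rfl⟩))
    (by
      rintro ⟨T, hT, h⟩
      refine hnp ⟨T, hT, fun t => ?_⟩
      have := h (-(t + T))
      simpa using this.symm)
  refine ⟨a, b, ha, by simpa using hb, hat, ?_⟩
  have := hbt.comp tendsto_neg_atBot_atTop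
  simpa [Function.comp_def] using this
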